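/- Let φ : ℂ → ℂ be analytic on the open disk {t : |t − 1| < R} for some R > 1, and let a, b, d be complex numbers such that b and d are not nonpositive integers or zero, d ≠ a, and f := d(b−a−1)/(d−a) is not a nonpositive integer or zero. Suppose the double series Σ_{k≥0} Σ_{n≥k} [(a)_k (d+1)_k / ((b)_k (d)_k k!)] · [(−1)^n (−n)_k / n!] · φ^{(n)}(1) is absolutely summable (so the order of summation may be interchanged). Then Σ_{k=0}^∞ (a)_k (d+1)_k φ^{(k)}(0) / ((b)_k (d)_k k!) = Σ_{k=0}^∞ (−1)^k (b−a−1)_k (f+1)_k φ^{(k)}(1) / ((b)_k (f)_k k!). -/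

import Mathlib

/-- The Pochhammer symbol `(a)_k = a (a+1) ⋯ (a+k-1)`. -/
noncomputable def poch (a : ℂ) (k : ℕ) : ℂ := Polynomial.eval a (ascPochhammer ℂ k)

theorem poch_zero (a : ℂ) : poch a 0 = 1 := by simp [poch]

theorem poch_succ (a : ℂ) (k : ℕ) : poch a (k + 1) = poch a k * (a + k) := by
  simp [poch, ascPochhammer_succ_eval]

theorem poch_succ' (a : ℂ) (k : ℕ) : poch a (k + 1) = a * poch (a + 1) k := by
  induction k with
  | zero => simp [poch_succ, poch_zero]
  | succ k ih => rw [poch_succ, ih, poch_succ (a + 1)]; push_cast; ring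

theorem poch_ne_zero (a : ℂ) (h : ∀ n : ℕ, a ≠ -(n : ℂ)) (k : ℕ) : poch a k ≠ 0 := by
  induction k with
  | zero => simp [poch_zero]
  | succ k ih =>
    rw [poch_succ]
    exact mul_ne_zero ih (fun h0 => h k (eq_neg_of_add_eq_zero_left h0))

theorem poch_shift (d : ℂ) (k : ℕ) : d * poch (d + 1) k = poch d k * (d + k) := by
  rw [← poch_succ', poch_succ]

theorem poch_neg (n k : ℕ) :
    poch (-(n : ℂ)) k = (-1) ^ k * ((Nat.factorial k : ℂ) * (n.choose k : ℂ)) := by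
  have : poch (-(n : ℂ)) k = (-1) ^ k * (n.descFactorial k : ℂ) := by
    induction k with
    | zero => simp [poch_zero]
    | succ k ih =>
      rw [poch_succ, ih, Nat.descFactorial_succ]
      rcases le_or_gt k n with h | h
      · push_cast [Nat.cast_sub h]; ring
      · rw [Nat.descFactorial_of_lt h]; simp
  rw [this, Nat.descFactorial_eq_factorial_mul_choose]; push_cast; rfl

theorem pascal_sum (g : ℕ → ℂ) (n : ℕ) :
    ∑ k ∈ Finset.range (n + 2), (-1 : ℂ) ^ k * ((n + 1).choose k : ℂ) * g k =
      ∑ k ∈ Finset.range (n + 1), (-1 : ℂ) ^ k * (n.choose k : ℂ) * g k -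
      ∑ k ∈ Finset.range (n + 1), (-1 : ℂ) ^ k * (n.choose k : ℂ) * g (k + 1) := by
  have h1 : ∑ k ∈ Finset.range (n + 1), (-1 : ℂ) ^ k * (n.choose k : ℂ) * g k =
      ∑ k ∈ Finset.range (n + 2), (-1 : ℂ) ^ k * (n.choose k : ℂ) * g k := by
    rw [Finset.sum_range_succ _ (n + 1)]; simp
  rw [h1, Finset.sum_range_succ', Finset.sum_range_succ' _ (n + 1), add_sub_right_comm,
    ← Finset.sum_sub_distrib]
  congr 1
  · refine Finset.sum_congr rfl fun k _ => ?_
    rw [Nat.choose_succ_succ]; push_cast; ring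
  · simp

theorem U_sum (n : ℕ) : ∀ a b d : ℂ, (∀ m : ℕ, b ≠ -(m : ℂ)) →
    poch b (n + 1) * ∑ k ∈ Finset.range (n + 2), (-1 : ℂ) ^ k * ((n + 1).choose k : ℂ) *
      (poch a k * (d + k) / poch b k) =
    poch (b - a) n * (d * (b - a + n) - (n + 1) * a) := by
  induction n with
  | zero =>
    intro a b d hb
    have hb0 : b ≠ 0 := by simpa using hb 0
    simp [Finset.sum_range_succ, poch_succ, poch_zero]
    field_simp
    ring
  | succ n ih =>
    intro a b d hb
    have hb0 : b ≠ 0 := by simpa using hb 0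
    have hb' : ∀ m : ℕ, b + 1 ≠ -(m : ℂ) := fun m h => hb (m + 1) (by
      push_cast; linear_combination h)
    have e : ∑ k ∈ Finset.range (n + 2), (-1 : ℂ) ^ k * ((n + 1).choose k : ℂ) *
        (poch a (k + 1) * (d + ((k + 1 : ℕ) : ℂ)) / poch b (k + 1)) =
        a / b * ∑ k ∈ Finset.range (n + 2), (-1 : ℂ) ^ k * ((n + 1).choose k : ℂ) *
        (poch (a + 1) k * ((d + 1) + k) / poch (b + 1) k) := by
      rw [Finset.mul_sum]
      refine Finset.sum_congr rfl fun k _ => ?_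
      have := poch_ne_zero _ hb' k
      rw [poch_succ', poch_succ']
      field_simp
      push_cast
      ring
    have i1 := ih a b d hb
    have i2 := ih (a + 1) (b + 1) (d + 1) hb'
    rw [pascal_sum (fun k => poch a k * (d + k) / poch b k) (n + 1), e, mul_sub,
      show b + 1 - (a + 1) = b - a by ring] at *
    set S1 := ∑ k ∈ Finset.range (n + 2), (-1 : ℂ) ^ k * ((n + 1).choose k : ℂ) *
        (poch a k * (d + k) / poch b k)
    set S2 := ∑ k ∈ Finset.range (n + 2), (-1 : ℂ) ^ k * ((n + 1).choose k : ℂ) *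
        (poch (a + 1) k * ((d + 1) + k) / poch (b + 1) k)
    have e1 : poch b (n + 1 + 1) * S1 = (b + (n + 1)) * (poch b (n + 1) * S1) := by
      rw [poch_succ b (n + 1)]; push_cast; ring
    have e2 : poch b (n + 1 + 1) * (a / b * S2) = a * (poch (b + 1) (n + 1) * S2) := by
      rw [poch_succ' b (n + 1)]; field_simp
    rw [e1, e2, i1, i2, poch_succ (b - a) n]
    push_cast
    ring

theorem finite_id (a b d f : ℂ) (hf : f = d * (b - a - 1) / (d - a))
    (hb : ∀ n : ℕ, b ≠ -(n : ℂ)) (hd : ∀ n : ℕ, d ≠ -(n : ℂ)) (hda : d ≠ a)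
    (hfpos : ∀ n : ℕ, f ≠ -(n : ℂ)) (n : ℕ) :
    ∑ k ∈ Finset.range (n + 1), (-1 : ℂ) ^ k * (n.choose k : ℂ) *
      (poch a k * poch (d + 1) k / (poch b k * poch d k)) =
    poch (b - a - 1) n * poch (f + 1) n / (poch b n * poch f n) := by
  have hd0 : d ≠ 0 := by simpa using hd 0
  have hf0 : f ≠ 0 := by simpa using hfpos 0
  have hda' : d - a ≠ 0 := sub_ne_zero.mpr hda
  have q : ∀ x : ℂ, (∀ n : ℕ, x ≠ -(n : ℂ)) → ∀ k, poch (x + 1) k = poch x k * (x + k) / x := by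
    intro x hx k
    have : x ≠ 0 := by simpa using hx 0
    rw [← poch_shift]; field_simp
  have e : ∀ k : ℕ, poch a k * poch (d + 1) k / (poch b k * poch d k) =
      (poch a k * (d + k) / poch b k) / d := by
    intro k
    have := poch_ne_zero d hd k
    have := poch_ne_zero b hb k
    rw [q d hd]; field_simp
  have e3 : ∑ k ∈ Finset.range (n + 1), (-1 : ℂ) ^ k * (n.choose k : ℂ) *
      (poch a k * poch (d + 1) k / (poch b k * poch d k)) =
      (∑ k ∈ Finset.range (n + 1), (-1 : ℂ) ^ k * (n.choose k : ℂ) *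
        (poch a k * (d + k) / poch b k)) / d := by
    rw [Finset.sum_div]
    exact Finset.sum_congr rfl fun k _ => by rw [e]; ring
  rw [e3]
  cases n with
  | zero => simp [poch_zero, hd0]
  | succ n =>
    have hu := U_sum n a b d hb
    have h1 := poch_ne_zero b hb (n + 1)
    have h2 := poch_ne_zero f hfpos (n + 1)
    rw [q f hfpos, poch_succ' (b - a - 1), show b - a - 1 + 1 = b - a by ring]
    rw [mul_comm, ← eq_div_iff h1] at hu
    rw [hu]
    have hff : (b - a - 1) = f * (d - a) / d := by rw [hf]; field_simp
    have hba : b - a = f * (d - a) / d + 1 := by rw [← hff]; ring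
    generalize poch (b - a) n = P
    rw [hff, hba]
    push_cast
    field_simp
    ring

theorem taylor_at_zero (φ : ℂ → ℂ) (R : ℝ) (hR : 1 < R)
    (hφ : AnalyticOnNhd ℂ φ (Metric.ball (1 : ℂ) R)) (k : ℕ) :
    ∑' m : ℕ, (-1 : ℂ) ^ m / (Nat.factorial m : ℂ) * iteratedDeriv (k + m) φ 1 =
      iteratedDeriv k φ 0 := by
  have hA : AnalyticOnNhd ℂ (iteratedDeriv k φ) (Metric.ball (1 : ℂ) R) := by
    rw [iteratedDeriv_eq_iterate]; exact hφ.iterated_deriv k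
  have h0 : (0 : ℂ) ∈ Metric.ball (1 : ℂ) R := by simpa using hR
  have := (Complex.hasSum_taylorSeries_on_ball hA.differentiableOn h0).tsum_eq
  rw [← this]
  refine tsum_congr fun m => ?_
  have : iteratedDeriv (k + m) φ = iteratedDeriv m (iteratedDeriv k φ) := by
    simp only [iteratedDeriv_eq_iterate]
    rw [add_comm, Function.iterate_add_apply]
  rw [this]
  simp only [smul_eq_mul, zero_sub]
  ring

theorem tsum_swap (F : ℕ × ℕ → ℂ) (h : Summable F) :
    ∑' k, ∑' m, F (k, m) = ∑' n, ∑ p ∈ Finset.HasAntidiagonal.antidiagonal n, F p := by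
  rw [← h.tsum_prod]
  conv_rhs => congr; ext; rw [← Finset.sum_finset_coe, ← tsum_fintype (L := .unconditional _)]
  rw [← Finset.HasAntidiagonal.sigmaAntidiagonalEquivProd.tsum_eq F]
  exact ((Finset.HasAntidiagonal.sigmaAntidiagonalEquivProd.summable_iff).mpr h).tsum_sigma'
    (fun n ↦ (hasSum_fintype _).summable)

/-- Theorem 1 of the paper (generalization of Ramanujan's Entry 20): with
`f = d(b-a-1)/(d-a)`, if `φ` is analytic on a disk of radius `R > 1` about `1` and the
double series may be summed in either order, then
`Σ_{k≥0} (a)_k (d+1)_k φ^{(k)}(0) / ((b)_k (d)_k k!)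
  = Σ_{k≥0} (-1)^k (b-a-1)_k (f+1)_k φ^{(k)}(1) / ((b)_k (f)_k k!)`. -/
theorem ramanujan_entry20_generalization
    (φ : ℂ → ℂ) (R : ℝ) (hR : 1 < R)
    (hφ : AnalyticOnNhd ℂ φ (Metric.ball (1 : ℂ) R))
    (a b d f : ℂ)
    (hf : f = d * (b - a - 1) / (d - a))
    (hb : ∀ n : ℕ, b ≠ -(n : ℂ))
    (hd : ∀ n : ℕ, d ≠ -(n : ℂ))
    (hda : d ≠ a)
    (hfpos : ∀ n : ℕ, f ≠ -(n : ℂ))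
    (hsum : Summable (fun p : ℕ × ℕ =>
      ‖(poch a p.1 * poch (d + 1) p.1 /
          (poch b p.1 * poch d p.1 * (Nat.factorial p.1 : ℂ))) *
        ((-1 : ℂ) ^ (p.1 + p.2) * poch (-(((p.1 + p.2 : ℕ)) : ℂ)) p.1 /
          (Nat.factorial (p.1 + p.2) : ℂ)) * iteratedDeriv (p.1 + p.2) φ 1‖)) :
    ∑' k : ℕ, poch a k * poch (d + 1) k * iteratedDeriv k φ 0 /
        (poch b k * poch d k * (Nat.factorial k : ℂ))
      = ∑' k : ℕ, (-1 : ℂ) ^ k * poch (b - a - 1) k * poch (f + 1) k *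
          iteratedDeriv k φ 1 / (poch b k * poch f k * (Nat.factorial k : ℂ)) := by
  have hS := tsum_swap _ hsum.of_norm
  refine Eq.trans (Eq.trans ?_ hS) ?_
  · refine tsum_congr fun k => ?_
    rw [← taylor_at_zero φ R hR hφ k, ← tsum_mul_left, ← tsum_div_const]
    refine tsum_congr fun m => ?_
    have hfac : ((k + m).factorial : ℂ) = (k.factorial : ℂ) * ((k + m).choose k : ℂ) *
        (m.factorial : ℂ) := by
      rw [← Nat.add_choose_mul_factorial_mul_factorial k m, Nat.choose_symm_add]; push_cast; ring
    have hk : (k.factorial : ℂ) ≠ 0 := by exact_mod_cast k.factorial_ne_zero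
    have hm : (m.factorial : ℂ) ≠ 0 := by exact_mod_cast m.factorial_ne_zero
    have hc : ((k + m).choose k : ℂ) ≠ 0 := by
      exact_mod_cast (Nat.choose_pos (Nat.le_add_right k m)).ne'
    have hbk := poch_ne_zero b hb k
    have hdk := poch_ne_zero d hd k
    have hs : (-1 : ℂ) ^ (k + m) * (-1) ^ k = (-1) ^ m := by
      rw [pow_add, mul_right_comm, ← mul_pow]; simp
    have key : (-1 : ℂ) ^ (k + m) * poch (-(((k + m : ℕ)) : ℂ)) k / ((k + m).factorial : ℂ) =
        (-1) ^ m / (m.factorial : ℂ) := by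
      rw [poch_neg, hfac, ← mul_assoc, hs]; field_simp
    simp only [key]
    ring
  · refine tsum_congr fun n => ?_
    have hn : (n.factorial : ℂ) ≠ 0 := by exact_mod_cast n.factorial_ne_zero
    have hfin := finite_id a b d f hf hb hd hda hfpos n
    rw [Finset.Nat.sum_antidiagonal_eq_sum_range_succ_mk]
    have : (-1 : ℂ) ^ n * poch (b - a - 1) n * poch (f + 1) n *
          iteratedDeriv n φ 1 / (poch b n * poch f n * (Nat.factorial n : ℂ)) =
        (poch (b - a - 1) n * poch (f + 1) n / (poch b n * poch f n)) *
          ((-1) ^ n * iteratedDeriv n φ 1 / (Nat.factorial n : ℂ)) := by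
      rw [div_mul_div_comm]; congr 1; ring
    rw [this, ← hfin, Finset.sum_mul]
    refine Finset.sum_congr rfl fun k hk => ?_
    have hkn : k + (n - k) = n := by have := Finset.mem_range.mp hk; omega
    simp only [hkn, poch_neg]
    have hk : (k.factorial : ℂ) ≠ 0 := by exact_mod_cast k.factorial_ne_zero
    have hbk := poch_ne_zero b hb k
    have hdk := poch_ne_zero d hd k
    field_simp
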